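/- arXiv:2505.10470 — 2 statements merged into one kernel-verified Lean document; each statement's English description precedes it below -/
import Mathlib

section
/- Let n ≥ 2, let c, x ∈ ℝⁿ and r, p > 0 with |c − x| = p + r + δ for some δ > 0, let ω = (x − c)/|x − c|, let k ≥ max(|c|, |x|) > 0, and let 𝔟 be uniformly distributed on [−k, k]. Then the probability that the hyperplane H[ω;𝔟] separates B[c,r] and B[x,p] equals δ/(2k). -/
open MeasureTheory Metric Real
open scoped RealInnerProductSpace

/-- `H[w;b]` separates `B[c,r]` and `B[x,p]`: the linear functional `u ↦ ⟪w,u⟫ - b`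
is positive on one open ball and negative on the other. -/
def Separates {n : ℕ} (w : EuclideanSpace ℝ (Fin n)) (b : ℝ)
    (c : EuclideanSpace ℝ (Fin n)) (r : ℝ)
    (x : EuclideanSpace ℝ (Fin n)) (p : ℝ) : Prop :=
  ((∀ u ∈ ball c r, 0 < ⟪w, u⟫ - b) ∧ (∀ u ∈ ball x p, ⟪w, u⟫ - b < 0)) ∨
  ((∀ u ∈ ball c r, ⟪w, u⟫ - b < 0) ∧ (∀ u ∈ ball x p, 0 < ⟪w, u⟫ - b))

/-!
The functional `⟪w, ·⟫` maps `B[c,r]` onto the open interval of radius `‖w‖ * r` around `⟪w, c⟫`.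
For a unit vector `w`, the hyperplane `H[w;b]` therefore separates the two balls exactly when `b`
lies in the closed gap between the intervals of radius `r` around `⟪w, c⟫` and `p` around `⟪w, x⟫`.
This gap has length `|⟪w, x - c⟫| - (p + r)` (and is empty when that number is negative) and is
contained in `[-k, k]`; for `w = ω` its length is `δ`.
-/

section InnerProductSpace

variable {E : Type*} [NormedAddCommGroup E] [InnerProductSpace ℝ E] {w : E} {r : ℝ}

theorem image_inner_ball (hw : w ≠ 0) (c : E) (r : ℝ) :
    (fun u ↦ ⟪w, u⟫) '' ball c r = ball ⟪w, c⟫ (‖w‖ * r) := by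
  have norm_pos : 0 < ‖w‖ := norm_pos_iff.mpr hw
  apply Set.Subset.antisymm
  · rintro _ ⟨u, hu, rfl⟩
    rw [mem_ball, dist_eq_norm] at hu ⊢
    calc ‖⟪w, u⟫ - ⟪w, c⟫‖ = ‖⟪w, u - c⟫‖ := by rw [inner_sub_right]
      _ ≤ ‖w‖ * ‖u - c‖ := norm_inner_le_norm w (u - c)
      _ < ‖w‖ * r := by gcongr
  · intro t ht
    rw [mem_ball, Real.dist_eq] at ht
    refine ⟨c + ((t - ⟪w, c⟫) / ‖w‖ ^ 2) • w, ?_, ?_⟩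
    · rw [mem_ball, dist_eq_norm, add_sub_cancel_left, norm_smul, norm_div, Real.norm_eq_abs,
        norm_pow, norm_norm]
      calc |t - ⟪w, c⟫| / ‖w‖ ^ 2 * ‖w‖ = |t - ⟪w, c⟫| / ‖w‖ := by field_simp
        _ < r := (div_lt_iff₀' norm_pos).mpr ht
    · simp only [inner_add_right, real_inner_smul_right, real_inner_self_eq_norm_sq]
      field_simp
      ring

theorem forall_mem_ball_inner_lt_iff (hw : w ≠ 0) (hr : 0 < r) (c : E) (b : ℝ) :
    (∀ u ∈ ball c r, ⟪w, u⟫ < b) ↔ ⟪w, c⟫ + ‖w‖ * r ≤ b := by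
  have radius_pos : 0 < ‖w‖ * r := mul_pos (norm_pos_iff.mpr hw) hr
  rw [← Set.forall_mem_image (f := fun u ↦ ⟪w, u⟫) (p := fun t ↦ t < b), image_inner_ball hw,
    Real.ball_eq_Ioo]
  constructor
  · intro lt_b
    exact (isLUB_Ioo (by linarith)).2 fun t ht ↦ (lt_b t ht).le
  · exact fun le_b t ht ↦ ht.2.trans_le le_b

theorem forall_mem_ball_lt_inner_iff (hw : w ≠ 0) (hr : 0 < r) (c : E) (b : ℝ) :
    (∀ u ∈ ball c r, b < ⟪w, u⟫) ↔ b ≤ ⟪w, c⟫ - ‖w‖ * r := by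
  have := forall_mem_ball_inner_lt_iff (neg_ne_zero.mpr hw) hr c (-b)
  simp only [inner_neg_left, norm_neg, neg_lt_neg_iff] at this
  rw [this, le_sub_iff_add_le, neg_add_le_iff_le_add, ← sub_eq_add_neg, le_sub_iff_add_le']

theorem real_inner_inv_norm_smul_self (v : E) : ⟪‖v‖⁻¹ • v, v⟫ = ‖v‖ := by
  rw [real_inner_smul_left, real_inner_self_eq_norm_mul_norm, ← mul_assoc, inv_mul_mul_self]

end InnerProductSpace

theorem inv_smul_volume_restrict_Icc {s : Set ℝ} {a b d : ℝ} (hd : 0 < d)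
    (hs : Set.Icc a b ⊆ s) :
    ((ENNReal.ofReal d)⁻¹ • volume.restrict s) (Set.Icc a b) = ENNReal.ofReal ((b - a) / d) := by
  rw [Measure.smul_apply, Measure.restrict_eq_self volume hs, Real.volume_Icc, smul_eq_mul,
    ENNReal.ofReal_div_of_pos hd, ENNReal.div_eq_inv_mul]

namespace Separates

variable {n : ℕ} {w c x : EuclideanSpace ℝ (Fin n)} {b r p : ℝ}

theorem comm : Separates w b c r x p ↔ Separates w b x p c r := by
  simp only [Separates, and_comm, or_comm]

theorem iff_mem_Icc_or_mem_Icc (hw : w ≠ 0) (hr : 0 < r) (hp : 0 < p) :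
    Separates w b c r x p ↔
      b ∈ Set.Icc (⟪w, x⟫ + ‖w‖ * p) (⟪w, c⟫ - ‖w‖ * r) ∨
        b ∈ Set.Icc (⟪w, c⟫ + ‖w‖ * r) (⟪w, x⟫ - ‖w‖ * p) := by
  simp only [Separates, sub_pos, sub_neg, forall_mem_ball_inner_lt_iff hw hr,
    forall_mem_ball_inner_lt_iff hw hp, forall_mem_ball_lt_inner_iff hw hr,
    forall_mem_ball_lt_inner_iff hw hp, Set.mem_Icc]
  rw [and_comm]

theorem setOf_eq_Icc (hw : w ≠ 0) (hr : 0 < r) (hp : 0 < p) (hcx : ⟪w, c⟫ ≤ ⟪w, x⟫) :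
    {b | Separates w b c r x p} = Set.Icc (⟪w, c⟫ + ‖w‖ * r) (⟪w, x⟫ - ‖w‖ * p) := by
  have wrong_side_empty : Set.Icc (⟪w, x⟫ + ‖w‖ * p) (⟪w, c⟫ - ‖w‖ * r) = ∅ := by
    have norm_pos : 0 < ‖w‖ := norm_pos_iff.mpr hw
    apply Set.Icc_eq_empty_of_lt
    linarith [mul_pos norm_pos hr, mul_pos norm_pos hp]
  ext b
  rw [Set.mem_ofPred_eq, iff_mem_Icc_or_mem_Icc hw hr hp, wrong_side_empty, Set.mem_empty_iff_false,
    false_or]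

end Separates

theorem stmt4_general {n : ℕ} {w c x : EuclideanSpace ℝ (Fin n)} {r p k : ℝ} (hw : ‖w‖ = 1)
    (hr : 0 < r) (hp : 0 < p) (hk : max ‖c‖ ‖x‖ ≤ k) (hk0 : 0 < k) :
    ((ENNReal.ofReal (2 * k))⁻¹ • volume.restrict (Set.Icc (-k) k)) {b | Separates w b c r x p} =
      ENNReal.ofReal ((|⟪w, x - c⟫| - (p + r)) / (2 * k)) := by
  wlog hcx : ⟪w, c⟫ ≤ ⟪w, x⟫ generalizing c x r p
  · simp only [Separates.comm (c := c)]
    rw [this hp hr (max_comm ‖c‖ ‖x‖ ▸ hk) (le_of_not_ge hcx), ← neg_sub x c, inner_neg_right,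
      abs_neg, add_comm r p]
  have abs_inner_le : ∀ v : EuclideanSpace ℝ (Fin n), |⟪w, v⟫| ≤ ‖v‖ := fun v ↦ by
    simpa only [hw, one_mul] using abs_real_inner_le_norm w v
  have gap_subset : Set.Icc (⟪w, c⟫ + r) (⟪w, x⟫ - p) ⊆ Set.Icc (-k) k := by
    obtain ⟨hck, hxk⟩ := max_le_iff.mp hk
    have neg_k_le := neg_le_of_abs_le ((abs_inner_le c).trans hck)
    have le_k := le_of_abs_le ((abs_inner_le x).trans hxk)
    exact Set.Icc_subset_Icc (by linarith) (by linarith)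
  rw [Separates.setOf_eq_Icc (norm_ne_zero_iff.mp (hw ▸ one_ne_zero)) hr hp hcx, hw, one_mul,
    one_mul, inv_smul_volume_restrict_Icc (by positivity) gap_subset, inner_sub_right,
    abs_of_nonneg (sub_nonneg.mpr hcx)]
  congr 2
  ring

theorem stmt4 (n : ℕ) (hn : 2 ≤ n) (c x : EuclideanSpace ℝ (Fin n)) (r p δ k : ℝ)
    (hr : 0 < r) (hp : 0 < p) (hδ : 0 < δ) (hdist : ‖c - x‖ = p + r + δ)
    (hk : max ‖c‖ ‖x‖ ≤ k) (hk0 : 0 < max ‖c‖ ‖x‖)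
    (ω : EuclideanSpace ℝ (Fin n)) (hω : ω = ‖x - c‖⁻¹ • (x - c))
    (μ : Measure ℝ)
    (hμ : μ = (ENNReal.ofReal (2 * k))⁻¹ • volume.restrict (Set.Icc (-k) k)) :
    μ {b : ℝ | Separates ω b c r x p} = ENNReal.ofReal (δ / (2 * k)) := by
  rw [norm_sub_rev] at hdist
  have hxc : x - c ≠ 0 := norm_ne_zero_iff.mp (by rw [hdist]; positivity)
  have norm_ω : ‖ω‖ = 1 := hω ▸ NormedSpace.norm_normalize_eq_one_iff.mpr hxc
  rw [hμ, stmt4_general norm_ω hr hp hk (hk0.trans_le hk), hω, real_inner_inv_norm_smul_self,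
    abs_norm, hdist, add_sub_cancel_left]
end

section
/- Let n ≥ 2, let σ ∈ (0, 1), set κ = 1 − σ², and let L and k be real numbers with 0 < L ≤ 2k. Then 0 ≤ (L/(2k)) · ( κ^{(n−1)/2} / ( ((n−1)/2) · B((n−1)/2, 1/2) ) − σ · I(κ; (n−1)/2, 1/2) ) ≤ 1. (In particular, the closed-form expression for the probability that a fully random hyperplane separates two balls is indeed a number in [0,1].) -/
open MeasureTheory Real

/-- The Beta function `B(y,z) = Γ(y)Γ(z)/Γ(y+z)`. -/
noncomputable def realBeta (y z : ℝ) : ℝ := Gamma y * Gamma z / Gamma (y + z)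

/-- The regularized incomplete beta function `I(κ; y, z)`. -/
noncomputable def regIncBeta (κ y z : ℝ) : ℝ :=
  (∫ s in (0:ℝ)..κ, s ^ (y - 1) * (1 - s) ^ (z - 1)) / realBeta y z

/-!
Since `κ ^ y / y = ∫ s in 0..κ, s ^ (y - 1)`, everything reduces to comparing `s ^ (y - 1)` with
the Beta integrand `s ^ (y - 1) * (1 - s) ^ (z - 1)`, where `z ≤ 1`. On `[0, κ]` the factor
`(1 - s) ^ (z - 1)` is at most `(1 - κ) ^ (z - 1)`, and `σ = (1 - κ) ^ (1 - z)` for `z = 1 / 2`;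
this gives the lower bound. On `[0, 1]` it is at least `1`, so `1 / y ≤ B(y, z)`; this gives the
upper bound.
-/

section BetaIntegral

variable {y z κ : ℝ}

lemma ofReal_betaIntegrand (y z : ℝ) {s : ℝ} (hs : s ∈ Set.Icc (0 : ℝ) 1) :
    ((s ^ (y - 1) * (1 - s) ^ (z - 1) : ℝ) : ℂ) =
      (s : ℂ) ^ ((y : ℂ) - 1) * (1 - (s : ℂ)) ^ ((z : ℂ) - 1) := by
  rw [Complex.ofReal_mul, Complex.ofReal_cpow hs.1, Complex.ofReal_cpow (sub_nonneg.2 hs.2)]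
  push_cast
  rfl

lemma intervalIntegrable_betaIntegrand (hy : 0 < y) (hz : 0 < z) (hκ : κ ∈ Set.Icc (0 : ℝ) 1) :
    IntervalIntegrable (fun s ↦ s ^ (y - 1) * (1 - s) ^ (z - 1)) volume 0 κ := by
  have integrable_zero_one :
      IntervalIntegrable (fun s : ℝ ↦ s ^ (y - 1) * (1 - s) ^ (z - 1)) volume 0 1 := by
    have complex_integrable :=
      Complex.betaIntegral_convergent (u := y) (v := z) (by simpa) (by simpa)
    rw [intervalIntegrable_iff_integrableOn_Icc_of_le zero_le_one] at complex_integrable ⊢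
    refine IntegrableOn.congr_fun complex_integrable.re (fun s hs ↦ ?_) measurableSet_Icc
    simp only [← ofReal_betaIntegrand y z hs, RCLike.re_to_complex, Complex.ofReal_re]
  refine integrable_zero_one.mono_set ?_
  rw [Set.uIcc_of_le hκ.1, Set.uIcc_of_le zero_le_one]
  exact Set.Icc_subset_Icc_right hκ.2

lemma realBeta_eq_integral (hy : 0 < y) (hz : 0 < z) :
    realBeta y z = ∫ s in (0 : ℝ)..1, s ^ (y - 1) * (1 - s) ^ (z - 1) := by
  have betaIntegral_eq_ofReal : Complex.betaIntegral y z =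
      ((∫ s in (0 : ℝ)..1, s ^ (y - 1) * (1 - s) ^ (z - 1) : ℝ) : ℂ) := by
    rw [← intervalIntegral.integral_ofReal, Complex.betaIntegral]
    refine intervalIntegral.integral_congr fun s hs ↦ ?_
    rw [Set.uIcc_of_le zero_le_one] at hs
    exact (ofReal_betaIntegrand y z hs).symm
  calc realBeta y z = (Complex.betaIntegral y z).re :=
        ProbabilityTheory.beta_eq_betaIntegralReal y z hy hz
    _ = _ := by rw [betaIntegral_eq_ofReal, Complex.ofReal_re]

lemma realBeta_pos (hy : 0 < y) (hz : 0 < z) : 0 < realBeta y z :=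
  ProbabilityTheory.beta_pos hy hz

lemma integral_rpow_sub_one (hy : 0 < y) (κ : ℝ) :
    ∫ s in (0 : ℝ)..κ, s ^ (y - 1) = κ ^ y / y := by
  rw [integral_rpow (Or.inl (by linarith)), sub_add_cancel, zero_rpow hy.ne', sub_zero]

lemma intervalIntegrable_rpow_sub_one (hy : 0 < y) (κ : ℝ) :
    IntervalIntegrable (fun s : ℝ ↦ s ^ (y - 1)) volume 0 κ :=
  intervalIntegral.intervalIntegrable_rpow' (by linarith)

lemma one_le_mul_realBeta (hy : 0 < y) (hz : 0 < z) (hz1 : z ≤ 1) : 1 ≤ y * realBeta y z := by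
  have inv_le : 1 / y ≤ realBeta y z := by
    calc 1 / y = ∫ s in (0 : ℝ)..1, s ^ (y - 1) := by rw [integral_rpow_sub_one hy, one_rpow]
      _ ≤ ∫ s in (0 : ℝ)..1, s ^ (y - 1) * (1 - s) ^ (z - 1) := by
        refine intervalIntegral.integral_mono_on_of_le_Ioo zero_le_one
          (intervalIntegrable_rpow_sub_one hy 1)
          (intervalIntegrable_betaIntegrand hy hz ⟨zero_le_one, le_rfl⟩) fun s hs ↦ ?_
        exact le_mul_of_one_le_right (rpow_nonneg hs.1.le _)
          (one_le_rpow_of_pos_of_le_one_of_nonpos (sub_pos.2 hs.2) (by linarith [hs.1])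
            (by linarith))
      _ = realBeta y z := (realBeta_eq_integral hy hz).symm
  rwa [div_le_iff₀' hy] at inv_le

lemma regIncBeta_nonneg (hy : 0 < y) (hz : 0 < z) (hκ : κ ∈ Set.Icc (0 : ℝ) 1) :
    0 ≤ regIncBeta κ y z := by
  refine div_nonneg (intervalIntegral.integral_nonneg hκ.1 fun s hs ↦ ?_) (realBeta_pos hy hz).le
  exact mul_nonneg (rpow_nonneg hs.1 _) (rpow_nonneg (by linarith [hs.2, hκ.2]) _)

lemma one_sub_rpow_mul_one_sub_rpow_le_one (hz1 : z ≤ 1) (hκ : κ ≤ 1) {s : ℝ} (hs : s < κ) :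
    (1 - κ) ^ (1 - z) * (1 - s) ^ (z - 1) ≤ 1 := by
  have one_sub_pos : 0 < 1 - s := by linarith
  calc (1 - κ) ^ (1 - z) * (1 - s) ^ (z - 1)
      ≤ (1 - s) ^ (1 - z) * (1 - s) ^ (z - 1) := by gcongr
    _ = 1 := by rw [← rpow_add one_sub_pos, sub_add_sub_cancel, sub_self, rpow_zero]

lemma one_sub_rpow_mul_integral_betaIntegrand_le (hy : 0 < y) (hz : 0 < z) (hz1 : z ≤ 1)
    (hκ : κ ∈ Set.Icc (0 : ℝ) 1) :
    (1 - κ) ^ (1 - z) * ∫ s in (0 : ℝ)..κ, s ^ (y - 1) * (1 - s) ^ (z - 1) ≤ κ ^ y / y := by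
  rw [← integral_rpow_sub_one hy, ← intervalIntegral.integral_const_mul]
  refine intervalIntegral.integral_mono_on_of_le_Ioo hκ.1
    ((intervalIntegrable_betaIntegrand hy hz hκ).const_mul _)
    (intervalIntegrable_rpow_sub_one hy κ) fun s hs ↦ ?_
  rw [mul_left_comm]
  exact mul_le_of_le_one_right (rpow_nonneg hs.1.le _)
    (one_sub_rpow_mul_one_sub_rpow_le_one hz1 hκ.2 hs.2)

lemma one_sub_rpow_mul_regIncBeta_le (hy : 0 < y) (hz : 0 < z) (hz1 : z ≤ 1)
    (hκ : κ ∈ Set.Icc (0 : ℝ) 1) :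
    (1 - κ) ^ (1 - z) * regIncBeta κ y z ≤ κ ^ y / (y * realBeta y z) := by
  rw [regIncBeta, ← mul_div_assoc, ← div_div]
  exact div_le_div_of_nonneg_right (one_sub_rpow_mul_integral_betaIntegrand_le hy hz hz1 hκ)
    (realBeta_pos hy hz).le

lemma rpow_div_mul_realBeta_le_one (hy : 0 < y) (hz : 0 < z) (hz1 : z ≤ 1)
    (hκ : κ ∈ Set.Icc (0 : ℝ) 1) : κ ^ y / (y * realBeta y z) ≤ 1 :=
  div_le_one_of_le₀ ((rpow_le_one hκ.1 hκ.2 hy.le).trans (one_le_mul_realBeta hy hz hz1))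
    (mul_pos hy (realBeta_pos hy hz)).le

end BetaIntegral

theorem stmt14_general {y z κ L k : ℝ} (hy : 0 < y) (hz : 0 < z) (hz1 : z ≤ 1)
    (hκ : κ ∈ Set.Icc (0 : ℝ) 1) (hL : 0 < L) (hLk : L ≤ 2 * k) :
    0 ≤ L / (2 * k) *
        (κ ^ y / (y * realBeta y z) - (1 - κ) ^ (1 - z) * regIncBeta κ y z) ∧
      L / (2 * k) *
        (κ ^ y / (y * realBeta y z) - (1 - κ) ^ (1 - z) * regIncBeta κ y z) ≤ 1 := by
  have ratio_nonneg : 0 ≤ L / (2 * k) := div_nonneg hL.le (hL.le.trans hLk)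
  have ratio_le_one : L / (2 * k) ≤ 1 := div_le_one_of_le₀ hLk (hL.le.trans hLk)
  have diff_nonneg := sub_nonneg.2 (one_sub_rpow_mul_regIncBeta_le hy hz hz1 hκ)
  have subtrahend_nonneg : 0 ≤ (1 - κ) ^ (1 - z) * regIncBeta κ y z :=
    mul_nonneg (rpow_nonneg (sub_nonneg.2 hκ.2) _) (regIncBeta_nonneg hy hz hκ)
  have diff_le_one :=
    (sub_le_self _ subtrahend_nonneg).trans (rpow_div_mul_realBeta_le_one hy hz hz1 hκ)
  exact ⟨mul_nonneg ratio_nonneg diff_nonneg, mul_le_one₀ ratio_le_one diff_nonneg diff_le_one⟩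

theorem stmt14 (n : ℕ) (hn : 2 ≤ n) (σ : ℝ) (hσ : σ ∈ Set.Ioo (0:ℝ) 1)
    (κ : ℝ) (hκ : κ = 1 - σ ^ 2) (L k : ℝ) (hL : 0 < L) (hLk : L ≤ 2 * k) :
    0 ≤ (L / (2 * k)) *
        (κ ^ (((n : ℝ) - 1) / 2) /
            ((((n : ℝ) - 1) / 2) * realBeta (((n : ℝ) - 1) / 2) (1 / 2)) -
          σ * regIncBeta κ (((n : ℝ) - 1) / 2) (1 / 2)) ∧
      (L / (2 * k)) *
        (κ ^ (((n : ℝ) - 1) / 2) /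
            ((((n : ℝ) - 1) / 2) * realBeta (((n : ℝ) - 1) / 2) (1 / 2)) -
          σ * regIncBeta κ (((n : ℝ) - 1) / 2) (1 / 2)) ≤ 1 := by
  have exponent_pos : 0 < ((n : ℝ) - 1) / 2 := half_pos (sub_pos.2 (Nat.one_lt_cast.2 hn))
  have hκ_mem : κ ∈ Set.Icc (0 : ℝ) 1 := by constructor <;> nlinarith [hσ.1, hσ.2]
  have sigma_eq : σ = (1 - κ) ^ (1 - 1 / 2 : ℝ) := by
    rw [hκ, sub_sub_cancel, sub_half, ← sqrt_eq_rpow, sqrt_sq hσ.1.le]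
  rw [sigma_eq]
  exact stmt14_general exponent_pos one_half_pos one_half_lt_one.le hκ_mem hL hLk
end
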